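/- Let S ⊆ E and let R be a face of 𝒜_S. The cone σ_{S,R} has maximal dimension in Ñ, i.e. finrank of the linear span of σ_{S,R} equals |E| + d = dim Ñ, if and only if S = E and R is a vertex of 𝒜, i.e. R is a singleton. (Characterization of maximal cones of the Lawrence fan, from the proof of Proposition 4.1.) -/

import Mathlib

open Set Submodule

noncomputable section

variable {E : Type*} [Fintype E] [DecidableEq E]
variable {M : Type*} [NormedAddCommGroup M] [NormedSpace ℝ M] [FiniteDimensional ℝ M]

/-- The positive closed halfspace `H_e^+` of the hyperplane `H_e`. -/
def Hplus (a : E → (M →ₗ[ℝ] ℝ)) (r : E → ℝ) (e : E) : Set M := {m | a e m + r e ≤ 0}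

/-- The negative closed halfspace `H_e^-` of the hyperplane `H_e`. -/
def Hminus (a : E → (M →ₗ[ℝ] ℝ)) (r : E → ℝ) (e : E) : Set M := {m | 0 ≤ a e m + r e}

/-- `R` is a face of the localization `𝒜_S`: a nonempty fiber of the sign map
`M → SignType^S`, `m ↦ (sign (a e m + r e))_{e ∈ S}`. -/
def IsFace (a : E → (M →ₗ[ℝ] ℝ)) (r : E → ℝ) (S : Set E) (R : Set M) : Prop :=
  ∃ m₀ : M, R = {m : M | ∀ e ∈ S, SignType.sign (a e m + r e) = SignType.sign (a e m₀ + r e)}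

/-- `S^+(R)`: the elements `e ∈ S` with `R ⊆ H_e^+`. -/
def posSet (a : E → (M →ₗ[ℝ] ℝ)) (r : E → ℝ) (S : Set E) (R : Set M) : Set E :=
  {e ∈ S | R ⊆ Hplus a r e}

/-- `S^-(R)`: the elements `e ∈ S` with `R ⊆ H_e^-`. -/
def negSet (a : E → (M →ₗ[ℝ] ℝ)) (r : E → ℝ) (S : Set E) (R : Set M) : Set E :=
  {e ∈ S | R ⊆ Hminus a r e}

/-- `S^0(R) = S^+(R) ∩ S^-(R)`. -/
def zeroSet (a : E → (M →ₗ[ℝ] ℝ)) (r : E → ℝ) (S : Set E) (R : Set M) : Set E :=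
  posSet a r S R ∩ negSet a r S R

/-- The linear map `(E → ℝ) → N` sending the basis vector `δ_e` to `a_e`. -/
def toN (a : E → (M →ₗ[ℝ] ℝ)) : (E → ℝ) →ₗ[ℝ] (M →ₗ[ℝ] ℝ) :=
  Fintype.linearCombination ℝ a

/-- `Λ`, the kernel of `(E → ℝ) → N`. -/
def Lam (a : E → (M →ₗ[ℝ] ℝ)) : Submodule ℝ (E → ℝ) := LinearMap.ker (toN a)

/-- The antidiagonal embedding `∇ : x ↦ (x, -x)`. -/
def nabla : (E → ℝ) →ₗ[ℝ] (E → ℝ) × (E → ℝ) :=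
  LinearMap.prod LinearMap.id (-LinearMap.id)

/-- `∇(Λ)`. -/
def nabLam (a : E → (M →ₗ[ℝ] ℝ)) : Submodule ℝ ((E → ℝ) × (E → ℝ)) :=
  (Lam a).map nabla

/-- The Lawrence cocharacter space `Ñ = ((E → ℝ) × (E → ℝ))/∇(Λ)`. -/
abbrev tildeN (a : E → (M →ₗ[ℝ] ℝ)) : Type _ := ((E → ℝ) × (E → ℝ)) ⧸ nabLam a

/-- `ρ_e^+`, the image of `(δ_e, 0)` in `Ñ`. -/
def rhoP (a : E → (M →ₗ[ℝ] ℝ)) (e : E) : tildeN a :=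
  Submodule.Quotient.mk (Pi.single e 1, 0)

/-- `ρ_e^-`, the image of `(0, δ_e)` in `Ñ`. -/
def rhoM (a : E → (M →ₗ[ℝ] ℝ)) (e : E) : tildeN a :=
  Submodule.Quotient.mk (0, Pi.single e 1)

/-- The cone `σ_{S,R} ⊆ Ñ` generated by `{ρ_e^+ : e ∈ S^+(R)} ∪ {ρ_f^- : f ∈ S^-(R)}`
together with `0`: the set of all nonnegative linear combinations of these generators. -/
def sigmaCone (a : E → (M →ₗ[ℝ] ℝ)) (r : E → ℝ) (S : Set E) (R : Set M) : Set (tildeN a) :=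
  {v | ∃ c d : E → ℝ, (∀ e, 0 ≤ c e) ∧ (∀ e, 0 ≤ d e) ∧
    v = ∑ e, (posSet a r S R).indicator c e • rhoP a e
      + ∑ e, (negSet a r S R).indicator d e • rhoM a e}

/-!
The map `(x, y) ↦ (x + y, ∑ e, x e • a e)` embeds `Ñ` in `(E → ℝ) × N` and carries `ρ_e^+` to
`(δ_e, a_e)` and `ρ_e^-` to `(δ_e, 0)`. A shear of `(E → ℝ) × N` that kills the second component
of the vectors `(δ_e, a_e)` with `e ∉ S^-(R)` turns the span of `σ_{S,R}` into the product of the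
coordinate subspace of `S^+(R) ∪ S^-(R)` and the span of `{a_e : e ∈ S^0(R)}`. A face lies on one
side of every hyperplane, so `S^+(R) ∪ S^-(R) = S` and
`dim span σ_{S,R} = |S| + dim span {a_e : e ∈ S^0(R)}`.
As `R` is relatively open in the affine subspace `⋂ e ∈ S^0(R), H_e`, the last summand equals `d`
if and only if `R` is a point.
-/

open Module Filter Topology

section LinearAlgebra

theorem span_dual_eq_top_iff_forall_eq_zero {K V : Type*} [Field K] [AddCommGroup V] [Module K V]
    [FiniteDimensional K V] {s : Set (Dual K V)} :
    span K s = ⊤ ↔ ∀ v : V, (∀ f ∈ s, f v = 0) → v = 0 := by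
  have hcoann (v : V) : v ∈ (span K s).dualCoannihilator ↔ ∀ f ∈ s, f v = 0 := by
    rw [← SetLike.mem_coe, coe_dualCoannihilator_span, mem_ofPred_eq]
  simp only [← hcoann, ← Submodule.eq_bot_iff]
  constructor
  · intro h
    rw [h, dualCoannihilator_top]
  · intro h
    rw [← Subspace.dualCoannihilator_dualAnnihilator_eq (W := span K s), h, dualAnnihilator_bot]

section LawrenceConfig

variable {K ι V : Type*} [Ring K] [DecidableEq ι] [AddCommGroup V] [Module K V]

variable (K) in
/-- The Lawrence configuration of a family `b` along `P` and `Q`: the vectors `(δ_i, b_i)` for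
`i ∈ P` and `(δ_i, 0)` for `i ∈ Q`. The embedding of `Ñ` in `(E → ℝ) × N` maps the generators of
`σ_{S,R}` onto such a configuration. -/
def lawrenceConfig (b : ι → V) (P Q : Set ι) : Set ((ι → K) × V) :=
  (fun i ↦ (Pi.single i 1, b i)) '' P ∪ (fun i ↦ (Pi.single i 1, 0)) '' Q

variable (K) in
/-- The automorphism `(x, v) ↦ (x, v - ∑ i, x i • c i)` of `(ι → K) × V`; it straightens a
Lawrence configuration. -/
def shear [Fintype ι] (c : ι → V) : ((ι → K) × V) ≃ₗ[K] (ι → K) × V :=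
  (LinearEquiv.refl K _).skewProd (LinearEquiv.refl K V) (-Fintype.linearCombination K c)

theorem shear_single [Fintype ι] (c : ι → V) (i : ι) (v : V) :
    shear K c (Pi.single i 1, v) = (Pi.single i 1, v - c i) := by
  simp [shear, sub_eq_add_neg]

theorem image_shear_lawrenceConfig [Fintype ι] (b : ι → V) (P Q : Set ι) :
    shear K (Qᶜ.indicator b) '' lawrenceConfig K b P Q = lawrenceConfig K (Q.indicator b) P Q := by
  simp only [lawrenceConfig, image_union, image_image, shear_single]
  congr 1
  · refine image_congr fun i _ ↦ ?_
    rw [sub_eq_of_eq_add (indicator_self_add_compl_apply Q b i).symm]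
  · refine image_congr fun i hi ↦ ?_
    rw [indicator_of_notMem (notMem_compl_iff.2 hi), sub_zero]

theorem span_lawrenceConfig [Finite ι] {b : ι → V} {P Q : Set ι} (hb : ∀ i ∈ P \ Q, b i = 0) :
    span K (lawrenceConfig K b P Q) =
      (Pi.spanSubset K (P ∪ Q)).prod (span K (b '' (P ∩ Q))) := by
  have mem_of_mem_left {i : ι} (hP : i ∈ P) :
      (Pi.single i 1, b i) ∈ span K (lawrenceConfig K b P Q) :=
    subset_span (.inl (mem_image_of_mem _ hP))
  have mem_of_mem_right {i : ι} (hQ : i ∈ Q) :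
      (Pi.single i 1, 0) ∈ span K (lawrenceConfig K b P Q) :=
    subset_span (.inr (mem_image_of_mem _ hQ))
  have single_mem {i : ι} (hi : i ∈ P ∪ Q) : Pi.single i 1 ∈ Pi.spanSubset K (P ∪ Q) :=
    subset_span ⟨i, hi, Pi.basisFun_apply K ι i⟩
  apply le_antisymm
  · rw [lawrenceConfig, span_le]
    rintro _ (⟨i, hP, rfl⟩ | ⟨i, hQ, rfl⟩)
    · refine ⟨single_mem (.inl hP), ?_⟩
      by_cases hQ : i ∈ Q
      · exact subset_span (mem_image_of_mem b ⟨hP, hQ⟩)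
      · simp [hb i ⟨hP, hQ⟩]
    · exact ⟨single_mem (.inr hQ), zero_mem _⟩
  · rw [Pi.spanSubset, ← LinearMap.span_inl_union_inr, span_le]
    rintro _ (⟨_, ⟨i, hi, rfl⟩, rfl⟩ | ⟨_, ⟨i, ⟨hP, hQ⟩, rfl⟩, rfl⟩)
    · rw [Pi.basisFun_apply, SetLike.mem_coe, LinearMap.inl_apply]
      by_cases hQ : i ∈ Q
      · exact mem_of_mem_right hQ
      · have hP : i ∈ P := hi.resolve_right hQ
        exact hb i ⟨hP, hQ⟩ ▸ mem_of_mem_left hP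
    · simpa using sub_mem (mem_of_mem_left hP) (mem_of_mem_right hQ)

end LawrenceConfig

variable {K V : Type*} [DivisionRing K] [AddCommGroup V] [Module K V] [FiniteDimensional K V]

theorem finrank_submodule_prod {W : Type*} [AddCommGroup W] [Module K W]
    [FiniteDimensional K W] (p : Submodule K V) (q : Submodule K W) :
    finrank K (p.prod q) = finrank K p + finrank K q := by
  have hinj : Function.Injective (p.subtype.prodMap q.subtype) :=
    p.injective_subtype.prodMap q.injective_subtype
  rw [← finrank_prod, ← LinearMap.finrank_range_of_inj hinj, LinearMap.range_prodMap,
    range_subtype, range_subtype]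

theorem finrank_span_lawrenceConfig {ι : Type*} [Finite ι] [DecidableEq ι] (b : ι → V)
    (P Q : Set ι) :
    finrank K (span K (lawrenceConfig K b P Q)) =
      (P ∪ Q).ncard + finrank K (span K (b '' (P ∩ Q))) := by
  cases nonempty_fintype ι
  have himage : Q.indicator b '' (P ∩ Q) = b '' (P ∩ Q) :=
    image_congr fun i hi ↦ indicator_of_mem hi.2 b
  rw [← (shear K (Qᶜ.indicator b)).finrank_map_eq, map_span, LinearEquiv.coe_coe,
    image_shear_lawrenceConfig, span_lawrenceConfig fun i hi ↦ indicator_of_notMem hi.2 b, himage,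
    finrank_submodule_prod, Pi.dim_spanSubset]

end LinearAlgebra

theorem eventually_sign_add_mul_eq {K : Type*} [Field K] [LinearOrder K] [IsStrictOrderedRing K]
    [TopologicalSpace K] [OrderTopology K] {b c : K} (h : b = 0 → c = 0) :
    ∀ᶠ t in 𝓝 (0 : K), SignType.sign (b + t * c) = SignType.sign b := by
  by_cases hb : b = 0
  · simp [hb, h hb]
  · have hcont : ContinuousAt (fun t ↦ SignType.sign (b + t * c)) 0 :=
      ContinuousAt.comp (by simpa using continuousAt_sign_of_ne_zero hb) (by fun_prop)
    simpa [ContinuousAt, nhds_discrete] using hcont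

section Faces

omit [Fintype E] [DecidableEq E] [FiniteDimensional ℝ M]

variable {a : E → (M →ₗ[ℝ] ℝ)} {r : E → ℝ} {S : Set E} {R : Set M}

theorem IsFace.nonempty (hR : IsFace a r S R) : R.Nonempty := by
  obtain ⟨m, rfl⟩ := hR
  exact ⟨m, fun _ _ ↦ rfl⟩

theorem IsFace.mem_iff_sign_eq (hR : IsFace a r S R) {x y : M} (hx : x ∈ R) :
    y ∈ R ↔ ∀ e ∈ S, SignType.sign (a e y + r e) = SignType.sign (a e x + r e) := by
  obtain ⟨m, rfl⟩ := hR
  exact forall₂_congr fun e he ↦ by rw [hx e he]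

theorem IsFace.mem_posSet_iff (hR : IsFace a r S R) {x : M} (hx : x ∈ R) {e : E} :
    e ∈ posSet a r S R ↔ e ∈ S ∧ a e x + r e ≤ 0 := by
  refine and_congr_right fun he ↦ ⟨fun h ↦ h hx, fun h y hy ↦ ?_⟩
  rwa [Hplus, mem_ofPred_eq, ← sign_nonpos_iff, (hR.mem_iff_sign_eq hx).1 hy e he, sign_nonpos_iff]

theorem IsFace.mem_negSet_iff (hR : IsFace a r S R) {x : M} (hx : x ∈ R) {e : E} :
    e ∈ negSet a r S R ↔ e ∈ S ∧ 0 ≤ a e x + r e := by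
  refine and_congr_right fun he ↦ ⟨fun h ↦ h hx, fun h y hy ↦ ?_⟩
  rwa [Hminus, mem_ofPred_eq, ← sign_nonneg_iff, (hR.mem_iff_sign_eq hx).1 hy e he, sign_nonneg_iff]

theorem IsFace.mem_zeroSet_iff (hR : IsFace a r S R) {x : M} (hx : x ∈ R) {e : E} :
    e ∈ zeroSet a r S R ↔ e ∈ S ∧ a e x + r e = 0 := by
  rw [zeroSet, mem_inter_iff, hR.mem_posSet_iff hx, hR.mem_negSet_iff hx, ← and_and_left,
    le_antisymm_iff]

theorem IsFace.posSet_union_negSet (hR : IsFace a r S R) : posSet a r S R ∪ negSet a r S R = S := by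
  obtain ⟨x, hx⟩ := hR.nonempty
  ext e
  rw [mem_union, hR.mem_posSet_iff hx, hR.mem_negSet_iff hx, ← and_or_left,
    and_iff_left (le_total _ _)]

theorem IsFace.eventually_add_smul_mem [Finite E] (hR : IsFace a r S R) {x v : M} (hx : x ∈ R)
    (hv : ∀ e ∈ zeroSet a r S R, a e v = 0) : ∀ᶠ t in 𝓝 (0 : ℝ), x + t • v ∈ R := by
  simp only [hR.mem_iff_sign_eq hx, eventually_all]
  intro e he
  have hsign := eventually_sign_add_mul_eq (K := ℝ) fun h ↦ hv e ((hR.mem_zeroSet_iff hx).2 ⟨he, h⟩)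
  filter_upwards [hsign] with t ht
  rwa [map_add (a e), map_smul (a e), smul_eq_mul, add_right_comm]

theorem IsFace.exists_eq_singleton_iff [Finite E] [FiniteDimensional ℝ M] (hR : IsFace a r S R) :
    (∃ x, R = {x}) ↔ span ℝ (a '' zeroSet a r S R) = ⊤ := by
  rw [span_dual_eq_top_iff_forall_eq_zero]
  simp only [forall_mem_image]
  constructor
  · rintro ⟨x, rfl⟩ v hv
    have hsmall := (hR.eventually_add_smul_mem rfl hv).filter_mono (nhdsWithin_le_nhds (s := {0}ᶜ))
    obtain ⟨t, ht, ht0⟩ := (hsmall.and self_mem_nhdsWithin).exists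
    exact (smul_eq_zero.1 (add_eq_left.1 ht)).resolve_left ht0
  · intro h
    obtain ⟨x, hx⟩ := hR.nonempty
    refine ⟨x, eq_singleton_iff_unique_mem.2 ⟨hx, fun y hy ↦ sub_eq_zero.1 (h _ fun e he ↦ ?_)⟩⟩
    have hex := ((hR.mem_zeroSet_iff hx).1 he).2
    have hey := ((hR.mem_zeroSet_iff hy).1 he).2
    rw [map_sub, sub_eq_zero]
    exact add_right_cancel (hey.trans hex.symm)

end Faces

section Lawrence

omit [FiniteDimensional ℝ M]

/-- The linear map `(x, y) ↦ (x + y, ∑ e, x e • a e)`, whose kernel is `∇(Λ)`, so that it realizes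
`Ñ` as a subspace of `(E → ℝ) × N`. -/
def lawrenceMap (a : E → (M →ₗ[ℝ] ℝ)) :
    ((E → ℝ) × (E → ℝ)) →ₗ[ℝ] (E → ℝ) × (M →ₗ[ℝ] ℝ) :=
  (LinearMap.fst ℝ _ _ + LinearMap.snd ℝ _ _).prod (toN a ∘ₗ LinearMap.fst ℝ _ _)

omit [DecidableEq E] in
theorem ker_lawrenceMap (a : E → (M →ₗ[ℝ] ℝ)) : LinearMap.ker (lawrenceMap a) = nabLam a := by
  ext ⟨x, y⟩
  simp [lawrenceMap, nabLam, nabla, Lam, add_eq_zero_iff_neg_eq, and_comm]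

/-- The embedding of `Ñ` in `(E → ℝ) × N` sending `ρ_e^+` to `(δ_e, a_e)` and `ρ_e^-` to
`(δ_e, 0)`. -/
def lawrenceEmbedding (a : E → (M →ₗ[ℝ] ℝ)) : tildeN a →ₗ[ℝ] (E → ℝ) × (M →ₗ[ℝ] ℝ) :=
  (nabLam a).liftQ (lawrenceMap a) (ker_lawrenceMap a).ge

omit [DecidableEq E] in
theorem lawrenceEmbedding_injective (a : E → (M →ₗ[ℝ] ℝ)) :
    Function.Injective (lawrenceEmbedding a) :=
  LinearMap.ker_eq_bot.1 (ker_liftQ_eq_bot _ _ _ (ker_lawrenceMap a).le)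

theorem lawrenceEmbedding_rhoP (a : E → (M →ₗ[ℝ] ℝ)) (e : E) :
    lawrenceEmbedding a (rhoP a e) = (Pi.single e 1, a e) := by
  change lawrenceMap a (Pi.single e 1, 0) = _
  simp [lawrenceMap, toN]

theorem lawrenceEmbedding_rhoM (a : E → (M →ₗ[ℝ] ℝ)) (e : E) :
    lawrenceEmbedding a (rhoM a e) = (Pi.single e 1, 0) := by
  change lawrenceMap a (0, Pi.single e 1) = _
  simp [lawrenceMap]

theorem rhoP_mem_sigmaCone {a : E → (M →ₗ[ℝ] ℝ)} {r : E → ℝ} {S : Set E} {R : Set M} {e : E}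
    (he : e ∈ posSet a r S R) : rhoP a e ∈ sigmaCone a r S R := by
  have hnonneg : (0 : E → ℝ) ≤ Pi.single e 1 := Pi.single_nonneg.2 zero_le_one
  refine ⟨Pi.single e 1, 0, hnonneg, fun _ ↦ le_rfl, ?_⟩
  rw [indicator_eq_self.2 (Pi.support_single_subset.trans (singleton_subset_iff.2 he))]
  simp [Pi.single_apply]

theorem rhoM_mem_sigmaCone {a : E → (M →ₗ[ℝ] ℝ)} {r : E → ℝ} {S : Set E} {R : Set M} {e : E}
    (he : e ∈ negSet a r S R) : rhoM a e ∈ sigmaCone a r S R := by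
  have hnonneg : (0 : E → ℝ) ≤ Pi.single e 1 := Pi.single_nonneg.2 zero_le_one
  refine ⟨0, Pi.single e 1, fun _ ↦ le_rfl, hnonneg, ?_⟩
  rw [indicator_eq_self.2 (Pi.support_single_subset.trans (singleton_subset_iff.2 he))]
  simp [Pi.single_apply]

theorem span_sigmaCone (a : E → (M →ₗ[ℝ] ℝ)) (r : E → ℝ) (S : Set E) (R : Set M) :
    span ℝ (sigmaCone a r S R) =
      span ℝ (rhoP a '' posSet a r S R ∪ rhoM a '' negSet a r S R) := by
  refine le_antisymm (span_le.2 ?_) (span_mono ?_)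
  · have indicator_smul_mem {T : Set E} {ρ : E → tildeN a} {s : Set (tildeN a)}
        (hs : ρ '' T ⊆ s) (c : E → ℝ) (e : E) : T.indicator c e • ρ e ∈ span ℝ s := by
      by_cases he : e ∈ T
      · exact smul_mem _ _ (subset_span (hs (mem_image_of_mem ρ he)))
      · simp [he]
    rintro _ ⟨c, d, -, -, rfl⟩
    exact add_mem (sum_mem fun e _ ↦ indicator_smul_mem subset_union_left c e)
      (sum_mem fun e _ ↦ indicator_smul_mem subset_union_right d e)
  · rintro _ (⟨e, he, rfl⟩ | ⟨e, he, rfl⟩)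
    · exact rhoP_mem_sigmaCone he
    · exact rhoM_mem_sigmaCone he

end Lawrence

theorem IsFace.finrank_span_sigmaCone {a : E → (M →ₗ[ℝ] ℝ)} {r : E → ℝ} {S : Set E} {R : Set M}
    (hR : IsFace a r S R) :
    finrank ℝ (span ℝ (sigmaCone a r S R)) =
      S.ncard + finrank ℝ (span ℝ (a '' zeroSet a r S R)) := by
  have himage : lawrenceEmbedding a '' (rhoP a '' posSet a r S R ∪ rhoM a '' negSet a r S R) =
      lawrenceConfig ℝ a (posSet a r S R) (negSet a r S R) := by
    simp only [image_union, image_image, lawrenceEmbedding_rhoP, lawrenceEmbedding_rhoM,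
      lawrenceConfig]
  rw [(equivMapOfInjective _ (lawrenceEmbedding_injective a) _).finrank_eq, span_sigmaCone,
    map_span, himage, finrank_span_lawrenceConfig, hR.posSet_union_negSet, zeroSet]

theorem sigmaCone_maximal_iff_general (a : E → (M →ₗ[ℝ] ℝ)) (r : E → ℝ)
    (S : Set E) (R : Set M) (hR : IsFace a r S R) :
    finrank ℝ (span ℝ (sigmaCone a r S R)) = Fintype.card E + finrank ℝ M ↔
      S = Set.univ ∧ ∃ x : M, R = {x} := by
  have hS : S.ncard ≤ Fintype.card E := by
    simpa using ncard_le_ncard (subset_univ S)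
  have hN : finrank ℝ (span ℝ (a '' zeroSet a r S R)) ≤ finrank ℝ M :=
    (finrank_le _).trans_eq Subspace.dual_finrank_eq
  rw [hR.finrank_span_sigmaCone, hR.exists_eq_singleton_iff, eq_univ_iff_ncard,
    Nat.card_eq_fintype_card, Submodule.eq_top_iff_finrank_eq, Subspace.dual_finrank_eq]
  omega

/-- Characterization of maximal cones of the Lawrence fan (from the proof of Proposition 4.1):
`σ_{S,R}` has maximal dimension `|E| + d` iff `S = E` and `R` is a vertex of `𝒜`. -/
theorem sigmaCone_maximal_iff
    (a : E → (M →ₗ[ℝ] ℝ)) (r : E → ℝ)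
    (ha : ∀ e, a e ≠ 0) (hspan : Submodule.span ℝ (Set.range a) = ⊤)
    (S : Set E) (R : Set M) (hR : IsFace a r S R) :
    Module.finrank ℝ (Submodule.span ℝ (sigmaCone a r S R)) =
        Fintype.card E + Module.finrank ℝ M ↔
      S = Set.univ ∧ ∃ x : M, R = {x} :=
  sigmaCone_maximal_iff_general a r S R hR

end
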